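/- Let L be a finite-dimensional restricted Lie algebra over a field F of prime characteristic p, and let I be a minimal p-ideal of L. Then I is either p-perfect (i.e. I = [I,I] + ⟨I^[p]⟩_F) or strongly abelian (i.e. abelian with identically zero p-mapping). -/

import Mathlib

universe u

noncomputable section

open scoped BigOperators

/-- Iterated adjoint action: `adWord [a₁,…,aₖ] z = ⁅a₁, ⁅a₂, … ⁅aₖ, z⁆…⁆⁆`. -/
def adWord {L : Type u} [LieRing L] : List L → L → L
  | [], z => z
  | a :: l, z => ⁅a, adWord l z⁆

/-- Jacobson's universal sum `Λ(x,y) = ∑_{i=1}^{p-1} sᵢ(x,y)`, where `i • sᵢ(x,y)` is the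
coefficient of `t^(i-1)` in `ad(t•x+y)^(p-1) (x)`. -/
def jacobsonSum (p : ℕ) (F : Type u) {L : Type u} [Field F] [LieRing L] [LieAlgebra F L]
    (x y : L) : L :=
  ∑ i ∈ Finset.Icc 1 (p - 1),
    (((i : F))⁻¹ •
      ∑ w ∈ Finset.univ.filter
          (fun w : Fin (p - 1) → Bool =>
            (Finset.univ.filter (fun j => w j = true)).card = i - 1),
        adWord ((List.ofFn w).map (fun b => if b then x else y)) x)

/-- A restricted Lie algebra over a field of characteristic `p` is a Lie algebra equipped
with a `p`-mapping `x ↦ x^[p]` satisfying Jacobson's axioms. -/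
class RestrictedLieAlgebra (p : ℕ) (F L : Type u) [Field F] [LieRing L] [LieAlgebra F L] :
    Type u where
  pMap : L → L
  pMap_smul : ∀ (a : F) (x : L), pMap (a • x) = a ^ p • pMap x
  pMap_add : ∀ x y : L, pMap (x + y) = pMap x + pMap y + jacobsonSum p F x y
  ad_pMap : ∀ x y : L, ⁅pMap x, y⁆ = ((LieAlgebra.ad F L x) ^ p) y

/-- The `p`-mapping of a restricted Lie algebra. -/
def pmap (p : ℕ) (F : Type u) {L : Type u} [Field F] [LieRing L] [LieAlgebra F L]
    [RestrictedLieAlgebra p F L] : L → L :=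
  RestrictedLieAlgebra.pMap (p := p) (F := F)

section ChiefCore

variable (p : ℕ) (F L : Type u) [Field F] [LieRing L] [LieAlgebra F L]
  [RestrictedLieAlgebra p F L]

/-- A `p`-ideal of a restricted Lie algebra: an ideal closed under the `p`-mapping. -/
def IsPIdeal (I : LieIdeal F L) : Prop :=
  ∀ x ∈ I, pmap p F x ∈ I

/-- A `p`-chief series of a restricted Lie algebra: an ascending chain of `p`-ideals
`0 = L₀ ⊂ L₁ ⊂ ⋯ ⊂ Lₙ = L` such that each `Lⱼ/Lⱼ₋₁` is a minimal nonzero `p`-ideal of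
`L/Lⱼ₋₁` (expressed via the correspondence between `p`-ideals of `L/Lⱼ₋₁` and `p`-ideals
of `L` containing `Lⱼ₋₁`). -/
structure PChiefSeries where
  n : ℕ
  chain : Fin (n + 1) → LieIdeal F L
  chain_pIdeal : ∀ j, IsPIdeal p F L (chain j)
  chain_bot : chain 0 = ⊥
  chain_top : chain (Fin.last n) = ⊤
  chain_lt : ∀ j : Fin n, chain j.castSucc < chain j.succ
  chain_min : ∀ j : Fin n, ∀ K : LieIdeal F L, IsPIdeal p F L K →
    chain j.castSucc ≤ K → K ≤ chain j.succ → K = chain j.castSucc ∨ K = chain j.succ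

variable {p F L}

/-- The `p`-chief factor `Lⱼ/Lⱼ₋₁` is strongly abelian, i.e. it is an abelian Lie algebra
with zero `p`-mapping. -/
def PChiefSeries.IsStronglyAbelianFactor (c : PChiefSeries p F L) (j : Fin c.n) : Prop :=
  (∀ x ∈ c.chain j.succ, ∀ y ∈ c.chain j.succ, ⁅x, y⁆ ∈ c.chain j.castSucc) ∧
    ∀ x ∈ c.chain j.succ, pmap p F x ∈ c.chain j.castSucc

/-- The exact sequence `0 → Lⱼ/Lⱼ₋₁ → L/Lⱼ₋₁ → L/Lⱼ → 0` splits in the category of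
restricted Lie algebras, i.e. `Lⱼ/Lⱼ₋₁` has a complement in `L/Lⱼ₋₁` which is a restricted
subalgebra (expressed via the corresponding subspace `K` of `L`). -/
def PChiefSeries.IsSplitFactor (c : PChiefSeries p F L) (j : Fin c.n) : Prop :=
  ∃ K : Submodule F L, (∀ x ∈ K, ∀ y ∈ K, ⁅x, y⁆ ∈ K) ∧ (∀ x ∈ K, pmap p F x ∈ K) ∧
    (c.chain j.castSucc).toSubmodule ≤ K ∧
    K ⊓ (c.chain j.succ).toSubmodule = (c.chain j.castSucc).toSubmodule ∧
    K ⊔ (c.chain j.succ).toSubmodule = ⊤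

end ChiefCore
/-- A minimal `p`-ideal `I` of a finite-dimensional restricted Lie algebra
`L` over a field of prime characteristic `p` is either `p`-perfect, i.e.
`I = [I,I] + ⟨I^[p]⟩_F`, or strongly abelian, i.e. abelian with zero `p`-mapping. -/
theorem minimal_pIdeal_pPerfect_or_stronglyAbelian
    (p : ℕ) [Fact p.Prime] (F L : Type u) [Field F] [CharP F p] [LieRing L] [LieAlgebra F L]
    [RestrictedLieAlgebra p F L] [FiniteDimensional F L]
    (I : LieIdeal F L) (hI : IsPIdeal p F L I) (hne : I ≠ ⊥)
    (hmin : ∀ K : LieIdeal F L, IsPIdeal p F L K → K ≤ I → K = ⊥ ∨ K = I) :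
    I.toSubmodule =
        Submodule.span F {z : L | ∃ x ∈ I, ∃ y ∈ I, ⁅x, y⁆ = z} ⊔
          Submodule.span F {z : L | ∃ x ∈ I, pmap p F x = z} ∨
      (∀ x ∈ I, ∀ y ∈ I, ⁅x, y⁆ = 0) ∧ ∀ x ∈ I, pmap p F x = 0 := by
  have hp : 2 ≤ p := (Fact.out : p.Prime).two_le
  set A : Submodule F L := Submodule.span F {z : L | ∃ x ∈ I, ∃ y ∈ I, ⁅x, y⁆ = z} with hA
  set B : Submodule F L := Submodule.span F {z : L | ∃ x ∈ I, pmap p F x = z} with hB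
  have hbr : ∀ x ∈ I, ∀ y ∈ I, ⁅x, y⁆ ∈ A := fun x hx y hy =>
    Submodule.subset_span ⟨x, hx, y, hy, rfl⟩
  have hpm : ∀ x ∈ I, pmap p F x ∈ B := fun x hx =>
    Submodule.subset_span ⟨x, hx, rfl⟩
  have hadI : ∀ x ∈ I, ∀ l : L, ∀ n : ℕ, ((LieAlgebra.ad F L x) ^ (n + 1)) l ∈ I := by
    intro x hx l n
    rw [pow_succ', Module.End.mul_apply, LieAlgebra.ad_apply]
    exact lie_mem_left F L I x _ hx
  have hstabA : ∀ l : L, ∀ m ∈ A, ⁅l, m⁆ ∈ A := by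
    intro l m hm
    refine Submodule.span_induction (p := fun m _ => ⁅l, m⁆ ∈ A) ?_ ?_ ?_ ?_ hm
    · rintro z ⟨x, hx, y, hy, rfl⟩
      rw [leibniz_lie]
      exact A.add_mem (hbr _ (lie_mem_right F L I l x hx) _ hy)
        (hbr _ hx _ (lie_mem_right F L I l y hy))
    · simp
    · intro x y _ _ hx hy
      rw [lie_add]
      exact A.add_mem hx hy
    · intro a x _ hx
      rw [lie_smul]
      exact A.smul_mem a hx
  have hstabB : ∀ l : L, ∀ m ∈ B, ⁅l, m⁆ ∈ A := by
    intro l m hm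
    refine Submodule.span_induction (p := fun m _ => ⁅l, m⁆ ∈ A) ?_ ?_ ?_ ?_ hm
    · rintro z ⟨x, hx, rfl⟩
      obtain ⟨n, rfl⟩ : ∃ n, p = n + 1 + 1 := ⟨p - 2, by omega⟩
      rw [← lie_skew]
      refine A.neg_mem ?_
      have h := RestrictedLieAlgebra.ad_pMap (p := n + 1 + 1) (F := F) x l
      unfold pmap
      rw [h, pow_succ', Module.End.mul_apply, LieAlgebra.ad_apply]
      exact hbr _ hx _ (hadI x hx l n)
    · simp
    · intro x y _ _ hx hy
      rw [lie_add]
      exact A.add_mem hx hy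
    · intro a x _ hx
      rw [lie_smul]
      exact A.smul_mem a hx
  have hAI : A ≤ I.toSubmodule := by
    refine Submodule.span_le.2 ?_
    rintro z ⟨x, hx, y, hy, rfl⟩
    exact lie_mem_right F L I x y hy
  have hBI : B ≤ I.toSubmodule := by
    refine Submodule.span_le.2 ?_
    rintro z ⟨x, hx, rfl⟩
    exact hI x hx
  have hABI : A ⊔ B ≤ I.toSubmodule := sup_le hAI hBI
  let K : LieIdeal F L :=
    { (A ⊔ B : Submodule F L) with
      lie_mem := by
        intro l m hm
        obtain ⟨a, ha, b, hb, rfl⟩ := Submodule.mem_sup.1 hm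
        rw [lie_add]
        exact Submodule.mem_sup_left (A.add_mem (hstabA l a ha) (hstabB l b hb)) }
  have hKs : K.toSubmodule = A ⊔ B := rfl
  have hKp : IsPIdeal p F L K := fun x hx =>
    (Submodule.mem_sup_right (hpm x (hABI hx)) : pmap p F x ∈ A ⊔ B)
  rcases hmin K hKp (fun x hx => hABI hx) with h | h
  · right
    have h0 : ∀ z ∈ A ⊔ B, z = 0 := by
      intro z hz
      have hz' : z ∈ K := hz
      rw [h] at hz'
      exact (LieSubmodule.mem_bot z).1 hz'
    exact ⟨fun x hx y hy => h0 _ (Submodule.mem_sup_left (hbr x hx y hy)),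
      fun x hx => h0 _ (Submodule.mem_sup_right (hpm x hx))⟩
  · left
    rw [← hKs, h]
end
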